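/- arXiv:0801.0300 — 2 statements merged into one kernel-verified Lean document; each statement's English description precedes it below -/
import Mathlib

section
/- (Liouville's Lemma) The tuple (A₀,A₁,A₂,A₃) is metrisable near a point p ∈ U if and only if there exist smooth functions ψ₁, ψ₂, ψ₃ on a neighbourhood of p that solve the Liouville linear system and satisfy ψ₁ψ₃ − ψ₂² ≠ 0 at p. Explicitly, if (ψ₁,ψ₂,ψ₃) is such a solution then on the set where Δ := ψ₁ψ₃ − ψ₂² ≠ 0 the functions E = ψ₁/Δ², F = ψ₂/Δ², G = ψ₃/Δ² satisfy the four metrisability equations; conversely, if (E,F,G) realise the metrisability equations near p, then a solution (ψ₁,ψ₂,ψ₃) of the Liouville system with ψ₁ψ₃ − ψ₂² ≠ 0 at p exists. -/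
/-! With `Δ = ψ₁ψ₃ - ψ₂²`, two facts about the first derivatives at a point with `Δ ≠ 0` give both
directions. First, `(ψ₁, ψ₂, ψ₃)` always solves the Liouville system whose coefficients are those of
the geodesic equation of the metric `ψ / Δ²`. Second, the Liouville system is linear in the
coefficients and invertible when `Δ ≠ 0`, so a solution determines them. Hence a solution for
`(A₀, A₁, A₂, A₃)` forces these to be the geodesic coefficients of `ψ / Δ²`. Conversely, a metric
`g` with determinant `D` is of the form `ψ / Δ²` for `ψ = g / |D|^(2/3)`,
since then `Δ = D / |D|^(4/3)` and `1 / Δ² = |D|^(2/3)`. -/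

noncomputable section

open Matrix

/-- Partial derivative in the first (x) variable. -/
def pdx (f : ℝ × ℝ → ℝ) : ℝ × ℝ → ℝ :=
  fun p => deriv (fun t => f (t, p.2)) p.1

/-- Partial derivative in the second (y) variable. -/
def pdy (f : ℝ × ℝ → ℝ) : ℝ × ℝ → ℝ :=
  fun p => deriv (fun t => f (p.1, t)) p.2

/-- `pd 0 = ∂ₓ`, `pd 1 = ∂_y`. -/
def pd : Fin 2 → (ℝ × ℝ → ℝ) → (ℝ × ℝ → ℝ) := ![pdx, pdy]

/-- The Liouville linear system associated to `(A0, A1, A2, A3)`, holding on `U`. -/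
def LiouvilleSystem (U : Set (ℝ × ℝ)) (A0 A1 A2 A3 ψ1 ψ2 ψ3 : ℝ × ℝ → ℝ) : Prop :=
  ∀ p ∈ U,
    pdx ψ1 p = (2/3) * A1 p * ψ1 p - 2 * A0 p * ψ2 p ∧
    pdy ψ3 p = 2 * A3 p * ψ2 p - (2/3) * A2 p * ψ3 p ∧
    pdy ψ1 p + 2 * pdx ψ2 p
      = (4/3) * A2 p * ψ1 p - (2/3) * A1 p * ψ2 p - 2 * A0 p * ψ3 p ∧
    pdx ψ3 p + 2 * pdy ψ2 p
      = 2 * A3 p * ψ1 p - (4/3) * A1 p * ψ3 p + (2/3) * A2 p * ψ2 p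

/-- `(A0, A1, A2, A3)` is metrisable near `p` (within `U`). -/
def MetrisableNear (U : Set (ℝ × ℝ)) (A0 A1 A2 A3 : ℝ × ℝ → ℝ) (p : ℝ × ℝ) : Prop :=
  ∃ V : Set (ℝ × ℝ), IsOpen V ∧ p ∈ V ∧ V ⊆ U ∧
    ∃ E F G : ℝ × ℝ → ℝ,
      ContDiffOn ℝ (⊤ : ℕ∞) E V ∧ ContDiffOn ℝ (⊤ : ℕ∞) F V ∧ ContDiffOn ℝ (⊤ : ℕ∞) G V ∧
      (∀ q ∈ V, E q * G q - (F q) ^ 2 ≠ 0) ∧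
      (∀ q ∈ V,
        A0 q = (E q * pdy E q - 2 * E q * pdx F q + F q * pdx E q)
                 / (2 * (E q * G q - (F q) ^ 2)) ∧
        A1 q = (3 * F q * pdy E q + G q * pdx E q - 2 * F q * pdx F q - 2 * E q * pdx G q)
                 / (2 * (E q * G q - (F q) ^ 2)) ∧
        A2 q = (2 * F q * pdy F q + 2 * G q * pdy E q - 3 * F q * pdx G q - E q * pdy G q)
                 / (2 * (E q * G q - (F q) ^ 2)) ∧
        A3 q = (2 * G q * pdy F q - G q * pdx G q - F q * pdy G q)
                 / (2 * (E q * G q - (F q) ^ 2)))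

end

open Filter Topology

section PartialDerivatives

variable {f g : ℝ × ℝ → ℝ} {q : ℝ × ℝ}

lemma pdx_eq_fderiv (hf : DifferentiableAt ℝ f q) : pdx f q = fderiv ℝ f q (1, 0) :=
  (hf.hasFDerivAt.comp_hasDerivAt q.1
    ((hasDerivAt_id q.1).prodMk (hasDerivAt_const q.1 q.2))).deriv

lemma pdy_eq_fderiv (hf : DifferentiableAt ℝ f q) : pdy f q = fderiv ℝ f q (0, 1) :=
  (hf.hasFDerivAt.comp_hasDerivAt q.2
    ((hasDerivAt_const q.2 q.1).prodMk (hasDerivAt_id q.2))).deriv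

lemma pdx_congr (h : f =ᶠ[𝓝 q] g) : pdx f q = pdx g q :=
  (h.comp_tendsto (Continuous.prodMk_left q.2).continuousAt).deriv_eq

lemma pdy_congr (h : f =ᶠ[𝓝 q] g) : pdy f q = pdy g q :=
  (h.comp_tendsto (Continuous.prodMk_right q.1).continuousAt).deriv_eq

end PartialDerivatives

lemma hasFDerivAt_div_sq {𝕜 X : Type*} [NontriviallyNormedField 𝕜] [NormedAddCommGroup X]
    [NormedSpace 𝕜 X] {f d : X → 𝕜} {f' d' : X →L[𝕜] 𝕜} {x : X} (hf : HasFDerivAt f f' x)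
    (hd : HasFDerivAt d d' x) (hx : d x ≠ 0) :
    HasFDerivAt (f / d ^ 2) ((1 / d x ^ 2) • f' - (2 * f x / d x ^ 3) • d') x := by
  rw [div_eq_mul_inv]
  refine (hf.mul (((hasDerivAt_pow 2 (d x)).inv (pow_ne_zero 2 hx)).comp_hasFDerivAt x
    hd)).congr_fderiv ?_
  ext v
  simp only [Nat.cast_ofNat, Nat.add_one_sub_one, pow_one, Function.comp_apply, Pi.inv_apply,
    add_apply, smul_apply, smul_eq_mul, one_div, sub_apply]
  field_simp
  ring

/-- The determinant `a c - b²` of the symmetric matrix field `!![a, b; b, c]`: it is `EG - F²` for a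
metric, and `Δ` for a triple `(ψ₁, ψ₂, ψ₃)`. -/
def gramDet (a b c : ℝ × ℝ → ℝ) : ℝ × ℝ → ℝ := fun q => a q * c q - b q ^ 2

lemma gramDet_div (a b c k : ℝ × ℝ → ℝ) :
    gramDet (a / k) (b / k) (c / k) = gramDet a b c / k ^ 2 := by
  ext q
  simp only [gramDet, Pi.div_apply, Pi.pow_apply]
  ring

section GramDet

variable {a b c : ℝ × ℝ → ℝ}

lemma contDiffOn_gramDet {n : WithTop ℕ∞} {V : Set (ℝ × ℝ)} (ha : ContDiffOn ℝ n a V)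
    (hb : ContDiffOn ℝ n b V) (hc : ContDiffOn ℝ n c V) : ContDiffOn ℝ n (gramDet a b c) V :=
  (ha.mul hc).sub (hb.pow 2)

variable {q : ℝ × ℝ}

lemma differentiableAt_gramDet (ha : DifferentiableAt ℝ a q) (hb : DifferentiableAt ℝ b q)
    (hc : DifferentiableAt ℝ c q) : DifferentiableAt ℝ (gramDet a b c) q :=
  (ha.mul hc).sub (hb.pow 2)

lemma fderiv_gramDet_apply (ha : DifferentiableAt ℝ a q) (hb : DifferentiableAt ℝ b q)
    (hc : DifferentiableAt ℝ c q) (v : ℝ × ℝ) :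
    fderiv ℝ (gramDet a b c) q v =
      fderiv ℝ a q v * c q + a q * fderiv ℝ c q v - 2 * b q * fderiv ℝ b q v := by
  have h := (ha.hasFDerivAt.mul hc.hasFDerivAt).sub (hb.hasFDerivAt.pow 2)
  rw [show fderiv ℝ (gramDet a b c) q = _ from h.fderiv]
  simp only [Nat.add_one_sub_one, pow_one, nsmul_eq_mul, Nat.cast_ofNat, sub_apply, add_apply,
    smul_apply, smul_eq_mul]
  ring

lemma gramDet_div_ne_zero {k : ℝ × ℝ → ℝ} (h : gramDet a b c q ≠ 0) (hk : k q ≠ 0) :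
    gramDet (a / k) (b / k) (c / k) q ≠ 0 := by
  rw [gramDet_div]
  exact div_ne_zero h (pow_ne_zero 2 hk)

lemma div_div_gramDet_sq {k : ℝ × ℝ → ℝ} (h : gramDet a b c q ≠ 0)
    (hk : k q ^ 3 = gramDet a b c q ^ 2) (f : ℝ × ℝ → ℝ) :
    (f / k / gramDet (a / k) (b / k) (c / k) ^ 2) q = f q := by
  have hk0 : k q ≠ 0 := fun h0 => pow_ne_zero 2 h (by rw [← hk, h0, zero_pow three_ne_zero])
  rw [gramDet_div]
  simp only [Pi.div_apply, Pi.pow_apply, div_pow, ← hk]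
  field_simp

end GramDet

/-- The coefficients `A₀, A₁, A₂, A₃` of the equation `y'' = A₃ y'³ + A₂ y'² + A₁ y' + A₀` of the
unparametrised geodesics of the metric `E dx² + 2 F dx dy + G dy²`; they are junk where the metric
degenerates. -/
noncomputable def geodesicCoeff (E F G : ℝ × ℝ → ℝ) : Fin 4 → ℝ × ℝ → ℝ
  | 0, q => (E q * pdy E q - 2 * E q * pdx F q + F q * pdx E q) / (2 * gramDet E F G q)
  | 1, q => (3 * F q * pdy E q + G q * pdx E q - 2 * F q * pdx F q - 2 * E q * pdx G q)
      / (2 * gramDet E F G q)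
  | 2, q => (2 * F q * pdy F q + 2 * G q * pdy E q - 3 * F q * pdx G q - E q * pdy G q)
      / (2 * gramDet E F G q)
  | 3, q => (2 * G q * pdy F q - G q * pdx G q - F q * pdy G q) / (2 * gramDet E F G q)

lemma geodesicCoeff_congr {E F G E' F' G' : ℝ × ℝ → ℝ} {q : ℝ × ℝ} (hE : E =ᶠ[𝓝 q] E')
    (hF : F =ᶠ[𝓝 q] F') (hG : G =ᶠ[𝓝 q] G') (i : Fin 4) :
    geodesicCoeff E F G i q = geodesicCoeff E' F' G' i q := by
  fin_cases i <;>
    simp only [geodesicCoeff, gramDet, pdx_congr hE, pdx_congr hF, pdx_congr hG, pdy_congr hE,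
      pdy_congr hF, pdy_congr hG, hE.eq_of_nhds, hF.eq_of_nhds, hG.eq_of_nhds]

/-- The metric `E dx² + 2 F dx dy + G dy²` is nondegenerate at `q` and its unparametrised geodesics
have the coefficients `A₀, A₁, A₂, A₃` there: the condition imposed pointwise by
`MetrisableNear`. -/
def IsMetrisedAt (A0 A1 A2 A3 E F G : ℝ × ℝ → ℝ) (q : ℝ × ℝ) : Prop :=
  gramDet E F G q ≠ 0 ∧ A0 q = geodesicCoeff E F G 0 q ∧ A1 q = geodesicCoeff E F G 1 q ∧
    A2 q = geodesicCoeff E F G 2 q ∧ A3 q = geodesicCoeff E F G 3 q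

lemma isMetrisedAt_congr {A0 A1 A2 A3 E F G E' F' G' : ℝ × ℝ → ℝ} {q : ℝ × ℝ}
    (hE : E =ᶠ[𝓝 q] E') (hF : F =ᶠ[𝓝 q] F') (hG : G =ᶠ[𝓝 q] G') :
    IsMetrisedAt A0 A1 A2 A3 E F G q ↔ IsMetrisedAt A0 A1 A2 A3 E' F' G' q := by
  simp only [IsMetrisedAt, geodesicCoeff_congr hE hF hG, gramDet, hE.eq_of_nhds, hF.eq_of_nhds,
    hG.eq_of_nhds]

lemma metrisableNear_iff_exists_isMetrisedAt {U : Set (ℝ × ℝ)} {A0 A1 A2 A3 : ℝ × ℝ → ℝ}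
    {p : ℝ × ℝ} :
    MetrisableNear U A0 A1 A2 A3 p ↔
      ∃ V : Set (ℝ × ℝ), IsOpen V ∧ p ∈ V ∧ V ⊆ U ∧
        ∃ E F G : ℝ × ℝ → ℝ,
          ContDiffOn ℝ (⊤ : ℕ∞) E V ∧ ContDiffOn ℝ (⊤ : ℕ∞) F V ∧ ContDiffOn ℝ (⊤ : ℕ∞) G V ∧
          ∀ q ∈ V, IsMetrisedAt A0 A1 A2 A3 E F G q := by
  simp only [MetrisableNear, IsMetrisedAt, imp_and, forall_and]
  rfl

/-- The right-hand sides of the Liouville system are an invertible linear function of the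
coefficients of the projective structure. The multipliers in the proof are, up to scale, cofactors
of this `4 × 4` system, whose determinant is a constant multiple of `(a c - b²)²`. -/
lemma eq_zero_of_liouville_homogeneous {R : Type*} [CommRing R] [NoZeroDivisors R]
    (three_ne : (3 : R) ≠ 0) {a b c d0 d1 d2 d3 : R} (h : a * c - b ^ 2 ≠ 0)
    (e1 : a * d1 = 3 * b * d0) (e2 : c * d2 = 3 * b * d3)
    (e3 : 2 * a * d2 = b * d1 + 3 * c * d0) (e4 : 2 * c * d1 = 3 * a * d3 + b * d2) :
    d0 = 0 ∧ d1 = 0 ∧ d2 = 0 ∧ d3 = 0 := by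
  have h0 : d0 = 0 := by
    have : 3 * (a * c - b ^ 2) ^ 2 * d0 = 0 := by
      linear_combination (3 * a * b * c - b ^ 3) * e1 + 2 * a ^ 3 * e2 -
        a * (a * c + b ^ 2) * e3 - 2 * a ^ 2 * b * e4
    simpa [h, three_ne] using this
  have h3 : d3 = 0 := by
    have : 3 * (a * c - b ^ 2) ^ 2 * d3 = 0 := by
      linear_combination (3 * a * b * c - b ^ 3) * e2 + 2 * c ^ 3 * e1 -
        c * (a * c + b ^ 2) * e4 - 2 * c ^ 2 * b * e3
    simpa [h, three_ne] using this
  subst h0 h3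
  have h1 : (a * c - b ^ 2) * d1 = 0 := by
    linear_combination -3 * c * e1 + b * e3 + 2 * a * e4
  have h2 : (a * c - b ^ 2) * d2 = 0 := by
    linear_combination -3 * a * e2 + b * e4 + 2 * c * e3
  exact ⟨rfl, (mul_eq_zero_iff_left h).1 h1, (mul_eq_zero_iff_left h).1 h2, rfl⟩

namespace LiouvilleSystem

variable {U V : Set (ℝ × ℝ)} {A0 A1 A2 A3 B0 B1 B2 B3 ψ1 ψ2 ψ3 : ℝ × ℝ → ℝ}

lemma mono (h : LiouvilleSystem V A0 A1 A2 A3 ψ1 ψ2 ψ3) (hUV : U ⊆ V) :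
    LiouvilleSystem U A0 A1 A2 A3 ψ1 ψ2 ψ3 :=
  fun q hq => h q (hUV hq)

lemma coeff_congr (h : LiouvilleSystem U A0 A1 A2 A3 ψ1 ψ2 ψ3) (h0 : Set.EqOn A0 B0 U)
    (h1 : Set.EqOn A1 B1 U) (h2 : Set.EqOn A2 B2 U) (h3 : Set.EqOn A3 B3 U) :
    LiouvilleSystem U B0 B1 B2 B3 ψ1 ψ2 ψ3 :=
  fun q hq => by simpa only [h0 hq, h1 hq, h2 hq, h3 hq] using h q hq

theorem coeff_unique (hA : LiouvilleSystem U A0 A1 A2 A3 ψ1 ψ2 ψ3)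
    (hB : LiouvilleSystem U B0 B1 B2 B3 ψ1 ψ2 ψ3) {q : ℝ × ℝ} (hq : q ∈ U)
    (h : gramDet ψ1 ψ2 ψ3 q ≠ 0) :
    A0 q = B0 q ∧ A1 q = B1 q ∧ A2 q = B2 q ∧ A3 q = B3 q := by
  obtain ⟨a1, a2, a3, a4⟩ := hA q hq
  obtain ⟨b1, b2, b3, b4⟩ := hB q hq
  simpa only [sub_eq_zero] using eq_zero_of_liouville_homogeneous three_ne_zero h
    (d0 := A0 q - B0 q) (d1 := A1 q - B1 q) (d2 := A2 q - B2 q) (d3 := A3 q - B3 q)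
    (by linear_combination (3 / 2) * (b1 - a1)) (by linear_combination (3 / 2) * (a2 - b2))
    (by linear_combination (3 / 2) * (b3 - a3)) (by linear_combination (3 / 2) * (a4 - b4))

end LiouvilleSystem

section Correspondence

variable {A0 A1 A2 A3 ψ1 ψ2 ψ3 : ℝ × ℝ → ℝ} {q : ℝ × ℝ}

theorem liouvilleSystem_geodesicCoeff (h1 : DifferentiableAt ℝ ψ1 q)
    (h2 : DifferentiableAt ℝ ψ2 q) (h3 : DifferentiableAt ℝ ψ3 q)
    (h0 : gramDet ψ1 ψ2 ψ3 q ≠ 0) {E F G : ℝ × ℝ → ℝ} (hE : E = ψ1 / gramDet ψ1 ψ2 ψ3 ^ 2)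
    (hF : F = ψ2 / gramDet ψ1 ψ2 ψ3 ^ 2) (hG : G = ψ3 / gramDet ψ1 ψ2 ψ3 ^ 2) :
    LiouvilleSystem {q} (geodesicCoeff E F G 0) (geodesicCoeff E F G 1) (geodesicCoeff E F G 2)
      (geodesicCoeff E F G 3) ψ1 ψ2 ψ3 := by
  have hΔ := differentiableAt_gramDet h1 h2 h3
  have hasFDerivAt_rescale {f : ℝ × ℝ → ℝ} (hf : DifferentiableAt ℝ f q) :=
    hasFDerivAt_div_sq hf.hasFDerivAt hΔ.hasFDerivAt h0
  have hE' := hasFDerivAt_rescale h1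
  have hF' := hasFDerivAt_rescale h2
  have hG' := hasFDerivAt_rescale h3
  rintro _ rfl
  subst hE hF hG
  simp only [geodesicCoeff, gramDet_div, pdx_eq_fderiv, pdy_eq_fderiv, h1, h2, h3,
    hE'.differentiableAt, hF'.differentiableAt, hG'.differentiableAt, hE'.fderiv, hF'.fderiv,
    hG'.fderiv, sub_apply, smul_apply, smul_eq_mul, fderiv_gramDet_apply, Pi.div_apply,
    Pi.pow_apply]
  refine ⟨?_, ?_, ?_, ?_⟩ <;>
  · field_simp
    simp only [gramDet]
    ring

theorem isMetrisedAt_div_gramDet_sq_iff (h1 : DifferentiableAt ℝ ψ1 q)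
    (h2 : DifferentiableAt ℝ ψ2 q) (h3 : DifferentiableAt ℝ ψ3 q)
    (h0 : gramDet ψ1 ψ2 ψ3 q ≠ 0) :
    IsMetrisedAt A0 A1 A2 A3 (ψ1 / gramDet ψ1 ψ2 ψ3 ^ 2) (ψ2 / gramDet ψ1 ψ2 ψ3 ^ 2)
        (ψ3 / gramDet ψ1 ψ2 ψ3 ^ 2) q ↔
      LiouvilleSystem {q} A0 A1 A2 A3 ψ1 ψ2 ψ3 := by
  have hgeo := liouvilleSystem_geodesicCoeff h1 h2 h3 h0 rfl rfl rfl
  constructor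
  · rintro ⟨-, e0, e1, e2, e3⟩
    exact hgeo.coeff_congr (by simp [e0]) (by simp [e1]) (by simp [e2]) (by simp [e3])
  · exact fun hL => ⟨gramDet_div_ne_zero h0 (pow_ne_zero 2 h0), hL.coeff_unique hgeo rfl h0⟩

variable {n : WithTop ℕ∞} {V : Set (ℝ × ℝ)}

theorem exists_liouvilleSystem_of_isMetrisedAt (hn : n ≠ 0) (hV : IsOpen V)
    {E F G : ℝ × ℝ → ℝ} (hE : ContDiffOn ℝ n E V) (hF : ContDiffOn ℝ n F V)
    (hG : ContDiffOn ℝ n G V) (hA : ∀ q ∈ V, IsMetrisedAt A0 A1 A2 A3 E F G q) :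
    ∃ ψ1 ψ2 ψ3 : ℝ × ℝ → ℝ,
      ContDiffOn ℝ n ψ1 V ∧ ContDiffOn ℝ n ψ2 V ∧ ContDiffOn ℝ n ψ3 V ∧
      LiouvilleSystem V A0 A1 A2 A3 ψ1 ψ2 ψ3 ∧ ∀ q ∈ V, gramDet ψ1 ψ2 ψ3 q ≠ 0 := by
  -- `k = |D| ^ (2/3)`, written so as to be smooth for either sign of `D`.
  let k : ℝ × ℝ → ℝ := fun q => (gramDet E F G q ^ 2) ^ ((3 : ℕ) : ℝ)⁻¹
  have hDsq : ∀ q ∈ V, gramDet E F G q ^ 2 ≠ 0 := fun q hq => pow_ne_zero 2 (hA q hq).1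
  have hk3 (q : ℝ × ℝ) : k q ^ 3 = gramDet E F G q ^ 2 :=
    Real.rpow_inv_natCast_pow (sq_nonneg _) three_ne_zero
  have hk0 (q : ℝ × ℝ) (hq : q ∈ V) : k q ≠ 0 := fun h =>
    hDsq q hq (by rw [← hk3, h, zero_pow three_ne_zero])
  have hk : ContDiffOn ℝ n k V := ((contDiffOn_gramDet hE hF hG).pow 2).rpow_const_of_ne hDsq
  have hΔ (q : ℝ × ℝ) (hq : q ∈ V) : gramDet (E / k) (F / k) (G / k) q ≠ 0 :=
    gramDet_div_ne_zero (hA q hq).1 (hk0 q hq)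
  have recover (f : ℝ × ℝ → ℝ) (q : ℝ × ℝ) (hq : q ∈ V) :
      f / k / gramDet (E / k) (F / k) (G / k) ^ 2 =ᶠ[𝓝 q] f :=
    eventually_of_mem (hV.mem_nhds hq) fun r hr => div_div_gramDet_sq (hA r hr).1 (hk3 r) f
  have hdiff {f : ℝ × ℝ → ℝ} (hf : ContDiffOn ℝ n f V) (q : ℝ × ℝ) (hq : q ∈ V) :
      DifferentiableAt ℝ (f / k) q :=
    ((hf.div hk hk0).differentiableOn hn).differentiableAt (hV.mem_nhds hq)
  refine ⟨E / k, F / k, G / k, hE.div hk hk0, hF.div hk hk0, hG.div hk hk0, fun q hq => ?_, hΔ⟩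
  have hq' := (isMetrisedAt_congr (recover E q hq) (recover F q hq) (recover G q hq)).2 (hA q hq)
  exact (isMetrisedAt_div_gramDet_sq_iff (hdiff hE q hq) (hdiff hF q hq) (hdiff hG q hq)
    (hΔ q hq)).1 hq' q rfl

theorem exists_isMetrisedAt_of_liouvilleSystem (hn : n ≠ 0) (hV : IsOpen V)
    (h1 : ContDiffOn ℝ n ψ1 V) (h2 : ContDiffOn ℝ n ψ2 V) (h3 : ContDiffOn ℝ n ψ3 V)
    (hL : LiouvilleSystem V A0 A1 A2 A3 ψ1 ψ2 ψ3) (hq : q ∈ V) (h0 : gramDet ψ1 ψ2 ψ3 q ≠ 0) :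
    ∃ W : Set (ℝ × ℝ), IsOpen W ∧ q ∈ W ∧ W ⊆ V ∧
      ∃ E F G : ℝ × ℝ → ℝ,
        ContDiffOn ℝ n E W ∧ ContDiffOn ℝ n F W ∧ ContDiffOn ℝ n G W ∧
        ∀ r ∈ W, IsMetrisedAt A0 A1 A2 A3 E F G r := by
  have hΔ := contDiffOn_gramDet h1 h2 h3
  let W := V ∩ gramDet ψ1 ψ2 ψ3 ⁻¹' {0}ᶜ
  have hWV : W ⊆ V := Set.inter_subset_left
  have hdiv {f : ℝ × ℝ → ℝ} (hf : ContDiffOn ℝ n f V) :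
      ContDiffOn ℝ n (f / gramDet ψ1 ψ2 ψ3 ^ 2) W :=
    (hf.mono hWV).div ((hΔ.mono hWV).pow 2) fun r hr => pow_ne_zero 2 hr.2
  have hdiff {f : ℝ × ℝ → ℝ} (hf : ContDiffOn ℝ n f V) (r : ℝ × ℝ) (hr : r ∈ W) :
      DifferentiableAt ℝ f r :=
    (hf.differentiableOn hn).differentiableAt (hV.mem_nhds hr.1)
  refine ⟨W, hΔ.continuousOn.isOpen_inter_preimage hV isOpen_compl_singleton, ⟨hq, h0⟩, hWV,
    _, _, _, hdiv h1, hdiv h2, hdiv h3, fun r hr => ?_⟩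
  exact (isMetrisedAt_div_gramDet_sq_iff (hdiff h1 r hr) (hdiff h2 r hr) (hdiff h3 r hr) hr.2).2
    (hL.mono (Set.singleton_subset_iff.2 hr.1))

end Correspondence

theorem liouville_lemma_general {n : WithTop ℕ∞} (hn : n ≠ 0) (U : Set (ℝ × ℝ))
    (A0 A1 A2 A3 : ℝ × ℝ → ℝ) (p : ℝ × ℝ) :
    ((∃ V : Set (ℝ × ℝ), IsOpen V ∧ p ∈ V ∧ V ⊆ U ∧
        ∃ E F G : ℝ × ℝ → ℝ,
          ContDiffOn ℝ n E V ∧ ContDiffOn ℝ n F V ∧ ContDiffOn ℝ n G V ∧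
          ∀ q ∈ V, IsMetrisedAt A0 A1 A2 A3 E F G q) ↔
      ∃ V : Set (ℝ × ℝ), IsOpen V ∧ p ∈ V ∧ V ⊆ U ∧
        ∃ ψ1 ψ2 ψ3 : ℝ × ℝ → ℝ,
          ContDiffOn ℝ n ψ1 V ∧ ContDiffOn ℝ n ψ2 V ∧ ContDiffOn ℝ n ψ3 V ∧
          LiouvilleSystem V A0 A1 A2 A3 ψ1 ψ2 ψ3 ∧ gramDet ψ1 ψ2 ψ3 p ≠ 0) ∧
    ∀ (q : ℝ × ℝ) (ψ1 ψ2 ψ3 : ℝ × ℝ → ℝ), DifferentiableAt ℝ ψ1 q → DifferentiableAt ℝ ψ2 q →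
      DifferentiableAt ℝ ψ3 q → gramDet ψ1 ψ2 ψ3 q ≠ 0 →
      (IsMetrisedAt A0 A1 A2 A3 (ψ1 / gramDet ψ1 ψ2 ψ3 ^ 2) (ψ2 / gramDet ψ1 ψ2 ψ3 ^ 2)
          (ψ3 / gramDet ψ1 ψ2 ψ3 ^ 2) q ↔
        LiouvilleSystem {q} A0 A1 A2 A3 ψ1 ψ2 ψ3) := by
  refine ⟨⟨?_, ?_⟩, fun q ψ1 ψ2 ψ3 => isMetrisedAt_div_gramDet_sq_iff⟩
  · rintro ⟨V, hV, hp, hVU, E, F, G, hE, hF, hG, hA⟩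
    obtain ⟨ψ1, ψ2, ψ3, h1, h2, h3, hL, h0⟩ :=
      exists_liouvilleSystem_of_isMetrisedAt hn hV hE hF hG hA
    exact ⟨V, hV, hp, hVU, ψ1, ψ2, ψ3, h1, h2, h3, hL, h0 p hp⟩
  · rintro ⟨V, hV, hp, hVU, ψ1, ψ2, ψ3, h1, h2, h3, hL, h0⟩
    obtain ⟨W, hW, hpW, hWV, hmetric⟩ :=
      exists_isMetrisedAt_of_liouvilleSystem hn hV h1 h2 h3 hL hp h0
    exact ⟨W, hW, hpW, hWV.trans hVU, hmetric⟩

/-- **Liouville's Lemma.** A projective structure `(A₀,A₁,A₂,A₃)` is metrisable near `p`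
iff the Liouville linear system admits a solution `(ψ₁,ψ₂,ψ₃)` near `p` which is
nondegenerate at `p`; moreover any nondegenerate solution yields a metric via
`E = ψ₁/Δ², F = ψ₂/Δ², G = ψ₃/Δ²` with `Δ = ψ₁ψ₃ − ψ₂²`. -/
theorem liouville_lemma (U : Set (ℝ × ℝ)) (hU : IsOpen U) (hUconn : IsConnected U)
    (A0 A1 A2 A3 : ℝ × ℝ → ℝ)
    (hA0 : ContDiffOn ℝ (⊤ : ℕ∞) A0 U) (hA1 : ContDiffOn ℝ (⊤ : ℕ∞) A1 U)
    (hA2 : ContDiffOn ℝ (⊤ : ℕ∞) A2 U) (hA3 : ContDiffOn ℝ (⊤ : ℕ∞) A3 U)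
    (p : ℝ × ℝ) (hp : p ∈ U) :
    (MetrisableNear U A0 A1 A2 A3 p ↔
      ∃ V : Set (ℝ × ℝ), IsOpen V ∧ p ∈ V ∧ V ⊆ U ∧
        ∃ ψ1 ψ2 ψ3 : ℝ × ℝ → ℝ,
          ContDiffOn ℝ (⊤ : ℕ∞) ψ1 V ∧ ContDiffOn ℝ (⊤ : ℕ∞) ψ2 V ∧ ContDiffOn ℝ (⊤ : ℕ∞) ψ3 V ∧
          LiouvilleSystem V A0 A1 A2 A3 ψ1 ψ2 ψ3 ∧
          ψ1 p * ψ3 p - (ψ2 p) ^ 2 ≠ 0)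
    ∧
    (∀ V : Set (ℝ × ℝ), IsOpen V → V ⊆ U →
      ∀ ψ1 ψ2 ψ3 : ℝ × ℝ → ℝ,
        ContDiffOn ℝ (⊤ : ℕ∞) ψ1 V → ContDiffOn ℝ (⊤ : ℕ∞) ψ2 V → ContDiffOn ℝ (⊤ : ℕ∞) ψ3 V →
        LiouvilleSystem V A0 A1 A2 A3 ψ1 ψ2 ψ3 →
        ∀ q ∈ V, ψ1 q * ψ3 q - (ψ2 q) ^ 2 ≠ 0 →
          (let Δ : ℝ × ℝ → ℝ := fun r => ψ1 r * ψ3 r - (ψ2 r) ^ 2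
           let E : ℝ × ℝ → ℝ := fun r => ψ1 r / (Δ r) ^ 2
           let F : ℝ × ℝ → ℝ := fun r => ψ2 r / (Δ r) ^ 2
           let G : ℝ × ℝ → ℝ := fun r => ψ3 r / (Δ r) ^ 2
           E q * G q - (F q) ^ 2 ≠ 0 ∧
           A0 q = (E q * pdy E q - 2 * E q * pdx F q + F q * pdx E q)
                    / (2 * (E q * G q - (F q) ^ 2)) ∧
           A1 q = (3 * F q * pdy E q + G q * pdx E q - 2 * F q * pdx F q - 2 * E q * pdx G q)
                    / (2 * (E q * G q - (F q) ^ 2)) ∧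
           A2 q = (2 * F q * pdy F q + 2 * G q * pdy E q - 3 * F q * pdx G q - E q * pdy G q)
                    / (2 * (E q * G q - (F q) ^ 2)) ∧
           A3 q = (2 * G q * pdy F q - G q * pdx G q - F q * pdy G q)
                    / (2 * (E q * G q - (F q) ^ 2)))) := by
  obtain ⟨hiff, hpointwise⟩ := liouville_lemma_general (n := (⊤ : ℕ∞)) (by simp) U A0 A1 A2 A3 p
  refine ⟨metrisableNear_iff_exists_isMetrisedAt.trans hiff, ?_⟩
  intro V hV _ ψ1 ψ2 ψ3 h1 h2 h3 hL q hq h0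
  have hdiff {f : ℝ × ℝ → ℝ} (hf : ContDiffOn ℝ (⊤ : ℕ∞) f V) : DifferentiableAt ℝ f q :=
    (hf.differentiableOn (by simp)).differentiableAt (hV.mem_nhds hq)
  exact (hpointwise q ψ1 ψ2 ψ3 (hdiff h1) (hdiff h2) (hdiff h3) h0).2
    (hL.mono (Set.singleton_subset_iff.2 hq))
end

section
/- (Main Theorem) Assume A₀, A₁, A₂, A₃ admit continuous fifth derivatives. If the tuple (A₀,A₁,A₂,A₃) is metrisable near a point p ∈ U, then det M = 0 on a neighbourhood of p. -/
noncomputable section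

/-- Liouville's first projective invariant `L₁`. -/
def Lio1 (A0 A1 A2 A3 : ℝ × ℝ → ℝ) : ℝ × ℝ → ℝ := fun p =>
  (2/3) * pdx (pdy A1) p - (1/3) * pdx (pdx A2) p - pdy (pdy A0) p
    + A0 p * pdy A2 p + A2 p * pdy A0 p - A3 p * pdx A0 p - 2 * A0 p * pdx A3 p
    - (2/3) * A1 p * pdy A1 p + (1/3) * A1 p * pdx A2 p

/-- Liouville's second projective invariant `L₂`. -/
def Lio2 (A0 A1 A2 A3 : ℝ × ℝ → ℝ) : ℝ × ℝ → ℝ := fun p =>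
  (2/3) * pdx (pdy A2) p - (1/3) * pdy (pdy A1) p - pdx (pdx A3) p
    - A3 p * pdx A1 p - A1 p * pdx A3 p + A0 p * pdy A3 p + 2 * A3 p * pdy A0 p
    + (2/3) * A2 p * pdx A2 p - (1/3) * A2 p * pdy A1 p

/-- The row vector `V = (V₁,…,V₆)`. -/
def Vrow (A0 A1 A2 A3 : ℝ × ℝ → ℝ) : ℝ × ℝ → Fin 6 → ℝ := fun p =>
  ![2 * pdy (Lio2 A0 A1 A2 A3) p + 4 * A2 p * Lio2 A0 A1 A2 A3 p
      + 8 * A3 p * Lio1 A0 A1 A2 A3 p,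
    -2 * pdy (Lio1 A0 A1 A2 A3) p - 2 * pdx (Lio2 A0 A1 A2 A3) p
      - (4/3) * A1 p * Lio2 A0 A1 A2 A3 p + (4/3) * A2 p * Lio1 A0 A1 A2 A3 p,
    2 * pdx (Lio1 A0 A1 A2 A3) p - 8 * A0 p * Lio2 A0 A1 A2 A3 p
      - 4 * A1 p * Lio1 A0 A1 A2 A3 p,
    -5 * Lio2 A0 A1 A2 A3 p,
    -5 * Lio1 A0 A1 A2 A3 p,
    0]

/-- The connection matrix `Ω₁`. -/
def Om1 (A0 A1 A2 A3 : ℝ × ℝ → ℝ) : ℝ × ℝ → Matrix (Fin 6) (Fin 6) ℝ := fun p =>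
  Matrix.of
  ![![-(2/3) * A1 p, 2 * A0 p, 0, 0, 0, 0],
    ![0, 0, 0, -(1/2 : ℝ), 0, 0],
    ![-2 * A3 p, -(2/3) * A2 p, (4/3) * A1 p, 0, 1, 0],
    ![-(4/3) * pdx A2 p + 4 * A0 p * A3 p + (2/3) * pdy A1 p,
      -2 * pdy A0 p + (2/3) * pdx A1 p + 4 * A2 p * A0 p - (4/9) * (A1 p) ^ 2,
      2 * pdx A0 p - 4 * A0 p * A1 p,
      -(1/3) * A1 p, -3 * A0 p, 0],
    ![0, 0, 0, 0, 0, -1],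
    ![-(4/3) * pdx (pdy A2) p - (20/3) * A0 p * A2 p * A3 p + (2/3) * pdy (pdy A1) p
        + 4 * A3 p * pdy A0 p - 2 * A0 p * pdy A3 p - (16/9) * A2 p * pdx A2 p
        + (8/9) * A2 p * pdy A1 p,
      (2/3) * pdx (pdy A1) p - (4/3) * A1 p * pdy A1 p + 2 * A0 p * pdy A2 p
        - 2 * pdy (pdy A0) p + 4 * A2 p * pdy A0 p + 4 * A3 p * pdx A0 p
        + 6 * A0 p * pdx A3 p + (8/9) * A1 p * pdx A2 p
        + (4/3) * A0 p * A1 p * A3 p - (4/3) * A0 p * (A2 p) ^ 2,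
      2 * pdx (pdy A0) p + (2/3) * A0 p * pdx A2 p - (4/3) * A2 p * pdx A0 p
        - 4 * A1 p * pdy A0 p - (4/3) * A0 p * pdy A1 p
        + (8/3) * A0 p * A1 p * A2 p + 4 * A3 p * (A0 p) ^ 2,
      (4/3) * pdx A2 p - pdy A1 p + 5 * A0 p * A3 p,
      (1/3) * pdx A1 p - 4 * pdy A0 p + 3 * A2 p * A0 p - (2/9) * (A1 p) ^ 2,
      -(1/3) * A1 p]]

/-- The connection matrix `Ω₂`. -/
def Om2 (A0 A1 A2 A3 : ℝ × ℝ → ℝ) : ℝ × ℝ → Matrix (Fin 6) (Fin 6) ℝ := fun p =>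
  Matrix.of
  ![![-(4/3) * A2 p, (2/3) * A1 p, 2 * A0 p, 1, 0, 0],
    ![0, 0, 0, 0, -(1/2 : ℝ), 0],
    ![0, -2 * A3 p, (2/3) * A2 p, 0, 0, 0],
    ![0, 0, 0, 0, 0, -1],
    ![-2 * pdy A3 p - 4 * A3 p * A2 p,
      2 * pdx A3 p - (2/3) * pdy A2 p + 4 * A1 p * A3 p - (4/9) * (A2 p) ^ 2,
      (4/3) * pdy A1 p - (2/3) * pdx A2 p + 4 * A0 p * A3 p,
      3 * A3 p, (1/3) * A2 p, 0],
    ![-2 * pdx (pdy A3) p - 4 * A2 p * pdx A3 p - (4/3) * A3 p * pdx A2 p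
        + (2/3) * A3 p * pdy A1 p - (4/3) * A1 p * pdy A3 p
        - 4 * A0 p * (A3 p) ^ 2 - (8/3) * A1 p * A2 p * A3 p,
      2 * pdx (pdx A3) p - (4/3) * A2 p * pdx A2 p - (4/3) * A0 p * A2 p * A3 p
        - (2/3) * pdx (pdy A2) p + 4 * A1 p * pdx A3 p + 4 * A0 p * pdy A3 p
        + 6 * A3 p * pdy A0 p + (4/3) * A3 p * (A1 p) ^ 2 + 2 * A3 p * pdx A1 p
        + (8/9) * A2 p * pdy A1 p,
      -(2/3) * pdx (pdx A2) p + (8/9) * A1 p * pdx A2 p + 4 * A0 p * pdx A3 p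
        - 2 * A3 p * pdx A0 p - (16/9) * A1 p * pdy A1 p + (4/3) * pdx (pdy A1) p
        + (20/3) * A0 p * A1 p * A3 p,
      4 * pdx A3 p - (1/3) * pdy A2 p + 3 * A1 p * A3 p - (2/9) * (A2 p) ^ 2,
      pdx A2 p - (4/3) * pdy A1 p + 5 * A0 p * A3 p,
      (1/3) * A2 p]]

/-- `Ω` indexed by a direction. -/
def Om (A0 A1 A2 A3 : ℝ × ℝ → ℝ) : Fin 2 → ℝ × ℝ → Matrix (Fin 6) (Fin 6) ℝ :=
  ![Om1 A0 A1 A2 A3, Om2 A0 A1 A2 A3]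

/-- The operator `D_a W = ∂_a W − W·Ω_a` on row-vector-valued functions. -/
def Dop (A0 A1 A2 A3 : ℝ × ℝ → ℝ) (a : Fin 2) (W : ℝ × ℝ → Fin 6 → ℝ) :
    ℝ × ℝ → Fin 6 → ℝ := fun p =>
  (fun i => pd a (fun q => W q i) p) - Matrix.vecMul (W p) (Om A0 A1 A2 A3 a p)

/-- Iterated derivative `D_{a₁} ⋯ D_{a_j} W` (the head of the list acts last/outermost). -/
def DIter (A0 A1 A2 A3 : ℝ × ℝ → ℝ) (l : List (Fin 2)) (W : ℝ × ℝ → Fin 6 → ℝ) :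
    ℝ × ℝ → Fin 6 → ℝ :=
  l.foldr (Dop A0 A1 A2 A3) W

/-- Symmetrised iterated derivative `D_{(a₁} ⋯ D_{a_j)} V` of the vector `V`. -/
def DSym (A0 A1 A2 A3 : ℝ × ℝ → ℝ) (l : List (Fin 2)) : ℝ × ℝ → Fin 6 → ℝ := fun p =>
  ((l.permutations.length : ℝ))⁻¹ •
    (l.permutations.map (fun m => DIter A0 A1 A2 A3 m (Vrow A0 A1 A2 A3) p)).sum

/-- The `6 × 6` matrix `M([Γ])` with rows `V, D₁V, D₂V, D₁D₁V, (1/2)(D₁D₂V + D₂D₁V), D₂D₂V`. -/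
def Mmat (A0 A1 A2 A3 : ℝ × ℝ → ℝ) : ℝ × ℝ → Matrix (Fin 6) (Fin 6) ℝ := fun p =>
  Matrix.of
  ![Vrow A0 A1 A2 A3 p,
    DIter A0 A1 A2 A3 [0] (Vrow A0 A1 A2 A3) p,
    DIter A0 A1 A2 A3 [1] (Vrow A0 A1 A2 A3) p,
    DIter A0 A1 A2 A3 [0, 0] (Vrow A0 A1 A2 A3) p,
    (1/2 : ℝ) • (DIter A0 A1 A2 A3 [0, 1] (Vrow A0 A1 A2 A3) p
      + DIter A0 A1 A2 A3 [1, 0] (Vrow A0 A1 A2 A3) p),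
    DIter A0 A1 A2 A3 [1, 1] (Vrow A0 A1 A2 A3) p]

end

/-!
If a metric `E dx² + 2F dx dy + G dy²` with determinant `Δ` induces the projective structure, then
`(ψ₁, ψ₂, ψ₃) = |Δ|^(-2/3) (E, F, G)` solves Liouville's linear system. Adjoining `μ = 2∂ₓψ₂`,
`ν = 2∂_yψ₂` and `ρ = 2∂ₓ∂_yψ₂` closes the system: cross-differentiating the equations for `ψ₁` and
for `ψ₃` determines `∂ₓμ` and `∂_yν`, and differentiating once more determines `dρ`, so that the
column `Ψ` of the six unknowns satisfies `∂ₐΨ = -ΩₐΨ`. Hence the curvature of `Ω` annihilates `Ψ`.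
Its last row is `-V`, so `V · Ψ = 0`, and differentiating this relation shows that every iterated
derivative of `V`, and therefore every row of `M`, annihilates `Ψ`. As `Ψ` vanishes nowhere, `M` is
singular.
-/

open scoped ContDiff Topology

section PartialDerivatives

variable {f g : ℝ × ℝ → ℝ} {q : ℝ × ℝ} {m n : WithTop ℕ∞}

/-- The coordinate vector along which `pd a` differentiates. -/
def coordVec : Fin 2 → ℝ × ℝ := ![(1, 0), (0, 1)]

lemma pd_zero : pd 0 = pdx := rfl

lemma pd_one : pd 1 = pdy := rfl

lemma pd_eq_fderiv (hf : DifferentiableAt ℝ f q) (a : Fin 2) :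
    pd a f q = fderiv ℝ f q (coordVec a) := by
  fin_cases a
  · have h : HasDerivAt (fun t : ℝ => (t, q.2)) (1, 0) q.1 :=
      (hasDerivAt_id _).prodMk (hasDerivAt_const _ _)
    exact (hf.hasFDerivAt.comp_hasDerivAt q.1 h).deriv
  · have h : HasDerivAt (fun t : ℝ => (q.1, t)) (0, 1) q.2 :=
      (hasDerivAt_const _ _).prodMk (hasDerivAt_id _)
    exact (hf.hasFDerivAt.comp_hasDerivAt q.2 h).deriv

lemma pd_congr (h : f =ᶠ[𝓝 q] g) (a : Fin 2) : pd a f q = pd a g q := by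
  fin_cases a
  · exact (h.comp_tendsto (Continuous.tendsto' (by fun_prop) q.1 q rfl)).deriv_eq
  · exact (h.comp_tendsto (Continuous.tendsto' (by fun_prop) q.2 q rfl)).deriv_eq

lemma pd_const (a : Fin 2) (c : ℝ) : pd a (fun _ => c) q = 0 := by
  rw [pd_eq_fderiv (differentiableAt_const c), fderiv_fun_const]
  rfl

lemma pd_neg (a : Fin 2) (f : ℝ × ℝ → ℝ) (q : ℝ × ℝ) :
    pd a (fun p => -f p) q = -pd a f q := by
  fin_cases a <;> exact deriv.fun_neg

lemma pd_const_mul (a : Fin 2) (c : ℝ) (f : ℝ × ℝ → ℝ) (q : ℝ × ℝ) :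
    pd a (fun p => c * f p) q = c * pd a f q := by
  fin_cases a <;> exact deriv_const_mul_field c

lemma pd_add (a : Fin 2) (hf : DifferentiableAt ℝ f q) (hg : DifferentiableAt ℝ g q) :
    pd a (fun p => f p + g p) q = pd a f q + pd a g q := by
  rw [pd_eq_fderiv (hf.fun_add hg), pd_eq_fderiv hf, pd_eq_fderiv hg, fderiv_fun_add hf hg]
  rfl

lemma pd_sub (a : Fin 2) (hf : DifferentiableAt ℝ f q) (hg : DifferentiableAt ℝ g q) :
    pd a (fun p => f p - g p) q = pd a f q - pd a g q := by
  rw [pd_eq_fderiv (hf.fun_sub hg), pd_eq_fderiv hf, pd_eq_fderiv hg, fderiv_fun_sub hf hg]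
  rfl

lemma pd_mul (a : Fin 2) (hf : DifferentiableAt ℝ f q) (hg : DifferentiableAt ℝ g q) :
    pd a (fun p => f p * g p) q = pd a f q * g q + f q * pd a g q := by
  rw [pd_eq_fderiv (hf.fun_mul hg), pd_eq_fderiv hf, pd_eq_fderiv hg, fderiv_fun_mul hf hg]
  simp only [add_apply, smul_apply, smul_eq_mul]
  ring

lemma pd_sum {ι : Type*} {s : Finset ι} {F : ι → ℝ × ℝ → ℝ} (a : Fin 2)
    (hF : ∀ i ∈ s, DifferentiableAt ℝ (F i) q) :
    pd a (fun p => ∑ i ∈ s, F i p) q = ∑ i ∈ s, pd a (F i) q := by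
  rw [pd_eq_fderiv (.fun_sum hF), fderiv_fun_sum hF, sum_apply]
  exact Finset.sum_congr rfl fun i hi => (pd_eq_fderiv (hF i hi) a).symm

lemma pd_comp {φ : ℝ → ℝ} {φ' : ℝ} (a : Fin 2) (hφ : HasDerivAt φ φ' (f q))
    (hf : DifferentiableAt ℝ f q) : pd a (fun p => φ (f p)) q = φ' * pd a f q := by
  have h : HasFDerivAt (fun p => φ (f p)) (φ' • fderiv ℝ f q) q :=
    hφ.comp_hasFDerivAt q hf.hasFDerivAt
  rw [pd_eq_fderiv h.differentiableAt, pd_eq_fderiv hf, h.fderiv]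
  rfl

lemma pd_eventuallyEq_fderiv (hf : ContDiffAt ℝ n f q) (hn : 1 ≤ n) (a : Fin 2) :
    pd a f =ᶠ[𝓝 q] fun p => fderiv ℝ f p (coordVec a) :=
  ((hf.of_le hn).eventually (by simp)).mono fun _ hp =>
    pd_eq_fderiv (hp.differentiableAt (by simp)) a

lemma contDiffAt_pd (hf : ContDiffAt ℝ n f q) (hmn : m + 1 ≤ n) (a : Fin 2) :
    ContDiffAt ℝ m (pd a f) q :=
  ((hf.fderiv_right hmn).clm_apply contDiffAt_const).congr_of_eventuallyEq
    (pd_eventuallyEq_fderiv hf (le_add_self.trans hmn) a)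

lemma pd_comm (hf : ContDiffAt ℝ n f q) (hn : 2 ≤ n) (a b : Fin 2) :
    pd a (pd b f) q = pd b (pd a f) q := by
  have hd : DifferentiableAt ℝ (fderiv ℝ f) q :=
    (hf.fderiv_right (m := 1) hn).differentiableAt (by simp)
  have key (c d : Fin 2) :
      pd c (pd d f) q = fderiv ℝ (fderiv ℝ f) q (coordVec c) (coordVec d) := by
    rw [pd_congr (pd_eventuallyEq_fderiv hf (one_le_two.trans hn) d),
      pd_eq_fderiv (hd.clm_apply (differentiableAt_const _)),
      fderiv_clm_apply hd (differentiableAt_const _)]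
    simp
  rw [key, key]
  exact (hf.isSymmSndFDerivAt (by simpa using hn)).eq _ _

lemma pd_one_pd_zero (hf : ContDiffAt ℝ ∞ f q) : pd 1 (pd 0 f) q = pd 0 (pd 1 f) q :=
  pd_comm hf (WithTop.coe_le_coe.2 le_top) 1 0

lemma pd_zero_pd_one_pd_zero (hf : ContDiffAt ℝ ∞ f q) :
    pd 0 (pd 1 (pd 0 f)) q = pd 0 (pd 0 (pd 1 f)) q :=
  pd_congr (((hf.of_le (WithTop.coe_le_coe.2 le_top : (2 : WithTop ℕ∞) ≤ ∞)).eventually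
    (by simp)).mono fun _ hp => pd_comm hp le_rfl 1 0) 0

@[fun_prop]
lemma differentiableAt_of_contDiffAt_infty (hf : ContDiffAt ℝ ∞ f q) : DifferentiableAt ℝ f q :=
  hf.differentiableAt (by simp)

@[fun_prop]
lemma contDiffAt_infty_pd (hf : ContDiffAt ℝ ∞ f q) (a : Fin 2) : ContDiffAt ℝ ∞ (pd a f) q :=
  contDiffAt_pd hf (by simp) a

@[fun_prop]
lemma contDiffAt_infty_pdx (hf : ContDiffAt ℝ ∞ f q) : ContDiffAt ℝ ∞ (pdx f) q :=
  contDiffAt_pd hf (by simp) 0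

@[fun_prop]
lemma contDiffAt_infty_pdy (hf : ContDiffAt ℝ ∞ f q) : ContDiffAt ℝ ∞ (pdy f) q :=
  contDiffAt_pd hf (by simp) 1

@[fun_prop]
lemma contDiffAt_vecCons {E F : Type*} [NormedAddCommGroup E] [NormedSpace ℝ E]
    [NormedAddCommGroup F] [NormedSpace ℝ F] {x : E} {k : ℕ} {u : E → F} {v : E → Fin k → F}
    (hu : ContDiffAt ℝ n u x) (hv : ContDiffAt ℝ n v x) :
    ContDiffAt ℝ n (fun y => Matrix.vecCons (u y) (v y)) x :=
  contDiffAt_pi.2 (Fin.cases hu (contDiffAt_pi.1 hv))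

end PartialDerivatives

open Matrix

section ParallelSections

variable {ι : Type*} [Fintype ι] {V : Set (ℝ × ℝ)} {q : ℝ × ℝ}
  {Ω : Fin 2 → ℝ × ℝ → Matrix ι ι ℝ} {W Ψ : ℝ × ℝ → ι → ℝ}

/-- `Ψ` is a parallel section over `V` of the connection on column vectors dual to the one with
connection matrices `Ω`, that is `∂ₐΨ = -ΩₐΨ`. -/
def IsParallelOn (V : Set (ℝ × ℝ)) (Ω : Fin 2 → ℝ × ℝ → Matrix ι ι ℝ) (Ψ : ℝ × ℝ → ι → ℝ) : Prop :=
  ∀ q ∈ V, ∀ a i, pd a (fun p => Ψ p i) q = -(Ω a q *ᵥ Ψ q) i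

/-- The curvature `∂_yΩ₁ - ∂ₓΩ₂ + Ω₂Ω₁ - Ω₁Ω₂` of the connection with matrices `Ω`. -/
noncomputable def curvature (Ω : Fin 2 → ℝ × ℝ → Matrix ι ι ℝ) (q : ℝ × ℝ) : Matrix ι ι ℝ :=
  of (fun i j => pd 1 (fun p => Ω 0 p i j) q) - of (fun i j => pd 0 (fun p => Ω 1 p i j) q)
    + Ω 1 q * Ω 0 q - Ω 0 q * Ω 1 q

lemma pd_dotProduct (hW : DifferentiableAt ℝ W q) (hΨ : DifferentiableAt ℝ Ψ q) (a : Fin 2) :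
    pd a (fun p => W p ⬝ᵥ Ψ p) q
      = (fun i => pd a (fun p => W p i) q) ⬝ᵥ Ψ q + W q ⬝ᵥ fun i => pd a (fun p => Ψ p i) q := by
  simp only [dotProduct]
  rw [pd_sum a fun i _ => by fun_prop, ← Finset.sum_add_distrib]
  exact Finset.sum_congr rfl fun i _ => pd_mul a (by fun_prop) (by fun_prop)

lemma IsParallelOn.pd_pd (hΨ : IsParallelOn V Ω Ψ) (hV : IsOpen V) (hq : q ∈ V) {a : Fin 2} {i : ι}
    (hΩ : DifferentiableAt ℝ (fun p => Ω a p i) q) (hd : DifferentiableAt ℝ Ψ q) (b : Fin 2) :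
    pd b (pd a fun p => Ψ p i) q
      = -(of (fun i j => pd b (fun p => Ω a p i j) q) *ᵥ Ψ q) i + ((Ω a q * Ω b q) *ᵥ Ψ q) i := by
  have heq : pd a (fun p => Ψ p i) =ᶠ[𝓝 q] fun p => -(Ω a p i ⬝ᵥ Ψ p) :=
    Filter.eventually_of_mem (hV.mem_nhds hq) fun p hp => hΨ p hp a i
  have hpar : (fun j => pd b (fun p => Ψ p j) q) = -(Ω b q *ᵥ Ψ q) := funext (hΨ q hq b)
  rw [pd_congr heq, pd_neg, pd_dotProduct hΩ hd, hpar, dotProduct_neg, neg_add, neg_neg,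
    ← Matrix.mulVec_mulVec]
  rfl

lemma IsParallelOn.curvature_mulVec_apply (hΨ : IsParallelOn V Ω Ψ) (hV : IsOpen V) (hq : q ∈ V)
    {i : ι} (hΩ : ∀ a, DifferentiableAt ℝ (fun p => Ω a p i) q) (hd : ContDiffAt ℝ 2 Ψ q) :
    (curvature Ω q *ᵥ Ψ q) i = 0 := by
  have hd' : DifferentiableAt ℝ Ψ q := hd.differentiableAt two_ne_zero
  have hcomm := pd_comm (contDiffAt_pi.1 hd i) le_rfl 1 0
  rw [hΨ.pd_pd hV hq (hΩ 0) hd', hΨ.pd_pd hV hq (hΩ 1) hd'] at hcomm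
  simp only [curvature, Matrix.sub_mulVec, Matrix.add_mulVec, Pi.sub_apply, Pi.add_apply]
  linarith

end ParallelSections

section Connection

variable {A0 A1 A2 A3 : ℝ × ℝ → ℝ} {q : ℝ × ℝ} {V : Set (ℝ × ℝ)} {W Ψ : ℝ × ℝ → Fin 6 → ℝ}

lemma IsParallelOn.pd_dotProduct (hΨ : IsParallelOn V (Om A0 A1 A2 A3) Ψ) (hq : q ∈ V)
    (hW : DifferentiableAt ℝ W q) (hd : DifferentiableAt ℝ Ψ q) (a : Fin 2) :
    pd a (fun p => W p ⬝ᵥ Ψ p) q = Dop A0 A1 A2 A3 a W q ⬝ᵥ Ψ q := by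
  have hpar : (fun i => pd a (fun p => Ψ p i) q) = -(Om A0 A1 A2 A3 a q *ᵥ Ψ q) :=
    funext (hΨ q hq a)
  rw [_root_.pd_dotProduct hW hd, hpar, Dop, sub_dotProduct, ← dotProduct_mulVec, dotProduct_neg,
    sub_eq_add_neg]

section Smooth

variable (h0 : ContDiffAt ℝ ∞ A0 q) (h1 : ContDiffAt ℝ ∞ A1 q) (h2 : ContDiffAt ℝ ∞ A2 q)
  (h3 : ContDiffAt ℝ ∞ A3 q)

include h0 h1 h2 h3

lemma contDiffAt_Lio1 : ContDiffAt ℝ ∞ (Lio1 A0 A1 A2 A3) q := by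
  unfold Lio1
  fun_prop

lemma contDiffAt_Lio2 : ContDiffAt ℝ ∞ (Lio2 A0 A1 A2 A3) q := by
  unfold Lio2
  fun_prop

lemma contDiffAt_Vrow : ContDiffAt ℝ ∞ (Vrow A0 A1 A2 A3) q := by
  have hL1 := contDiffAt_Lio1 h0 h1 h2 h3
  have hL2 := contDiffAt_Lio2 h0 h1 h2 h3
  unfold Vrow
  fun_prop

lemma contDiffAt_Om_row (a : Fin 2) (i : Fin 6) :
    ContDiffAt ℝ ∞ (fun p => Om A0 A1 A2 A3 a p i) q := by
  refine contDiffAt_pi.1 (?_ : ContDiffAt ℝ ∞ (fun p => Matrix.of.symm (Om A0 A1 A2 A3 a p)) q) i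
  fin_cases a
  · change ContDiffAt ℝ ∞ (fun p => Matrix.of.symm (Om1 A0 A1 A2 A3 p)) q
    simp only [Om1, Equiv.symm_apply_apply]
    fun_prop
  · change ContDiffAt ℝ ∞ (fun p => Matrix.of.symm (Om2 A0 A1 A2 A3 p)) q
    simp only [Om2, Equiv.symm_apply_apply]
    fun_prop

lemma contDiffAt_Dop (hW : ContDiffAt ℝ ∞ W q) (a : Fin 2) :
    ContDiffAt ℝ ∞ (Dop A0 A1 A2 A3 a W) q := by
  have hΩ := contDiffAt_Om_row h0 h1 h2 h3 a
  refine contDiffAt_pi.2 fun i => ?_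
  simp only [Dop, Pi.sub_apply, Matrix.vecMul, dotProduct]
  fun_prop

lemma contDiffAt_DIter (hW : ContDiffAt ℝ ∞ W q) (l : List (Fin 2)) :
    ContDiffAt ℝ ∞ (DIter A0 A1 A2 A3 l W) q := by
  induction l with
  | nil => exact hW
  | cons a l ih => exact contDiffAt_Dop h0 h1 h2 h3 ih a

set_option maxHeartbeats 400000 in
-- Each entry is a polynomial identity in the partial derivatives of the `Aᵢ` up to third order.
lemma curvature_Om_five : curvature (Om A0 A1 A2 A3) q 5 = -Vrow A0 A1 A2 A3 q := by
  funext j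
  unfold Vrow Lio1 Lio2
  fin_cases j <;>
    simp (disch := fun_prop) only [← pd_zero, ← pd_one, curvature, Om, Om1, Om2, of_apply,
      Matrix.add_apply, Matrix.sub_apply, mul_apply, Pi.neg_apply, cons_val, Fin.sum_univ_six,
      Fin.isValue, Fin.zero_eta, Fin.mk_one, Fin.reduceFinMk, pd_add, pd_sub, pd_mul, pd_const, sq,
      pd_one_pd_zero, pd_zero_pd_one_pd_zero] <;>
    ring

end Smooth

end Connection

section Prolongation

/-- `(ψ1, ψ2, ψ3)` is a smooth solution, on the open set `V`, of the Liouville system with smooth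
coefficients `A0, A1, A2, A3`. -/
structure IsSmoothLiouvilleSolution (V : Set (ℝ × ℝ)) (A0 A1 A2 A3 ψ1 ψ2 ψ3 : ℝ × ℝ → ℝ) :
    Prop where
  isOpen : IsOpen V
  contDiffAt_coeff : ∀ q ∈ V, ContDiffAt ℝ ∞ A0 q ∧ ContDiffAt ℝ ∞ A1 q ∧ ContDiffAt ℝ ∞ A2 q ∧
    ContDiffAt ℝ ∞ A3 q
  contDiffAt : ∀ q ∈ V, ContDiffAt ℝ ∞ ψ1 q ∧ ContDiffAt ℝ ∞ ψ2 q ∧ ContDiffAt ℝ ∞ ψ3 q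
  liouvilleSystem : LiouvilleSystem V A0 A1 A2 A3 ψ1 ψ2 ψ3

/-- The column `(ψ₁, ψ₂, ψ₃, μ, ν, ρ)` of unknowns of the prolonged Liouville system, where
`μ = 2∂ₓψ₂`, `ν = 2∂_yψ₂` and `ρ = 2∂ₓ∂_yψ₂`. -/
noncomputable def prolongation (ψ1 ψ2 ψ3 : ℝ × ℝ → ℝ) : ℝ × ℝ → Fin 6 → ℝ := fun p =>
  ![ψ1 p, ψ2 p, ψ3 p, 2 * pd 0 ψ2 p, 2 * pd 1 ψ2 p, 2 * pd 0 (pd 1 ψ2) p]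

namespace IsSmoothLiouvilleSolution

variable {V : Set (ℝ × ℝ)} {A0 A1 A2 A3 ψ1 ψ2 ψ3 : ℝ × ℝ → ℝ} {q : ℝ × ℝ}
  (h : IsSmoothLiouvilleSolution V A0 A1 A2 A3 ψ1 ψ2 ψ3)

include h

lemma eventuallyEq_of_forall_mem {f g : ℝ × ℝ → ℝ} (hq : q ∈ V) (hfg : ∀ p ∈ V, f p = g p) :
    f =ᶠ[𝓝 q] g :=
  Filter.eventually_of_mem (h.isOpen.mem_nhds hq) hfg

lemma contDiffAt_prolongation (hq : q ∈ V) : ContDiffAt ℝ ∞ (prolongation ψ1 ψ2 ψ3) q := by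
  obtain ⟨h1, h2, h3⟩ := h.contDiffAt q hq
  unfold prolongation
  fun_prop

lemma pd_zero_fst (hq : q ∈ V) : pd 0 ψ1 q = (2/3) * A1 q * ψ1 q - 2 * A0 q * ψ2 q :=
  (h.liouvilleSystem q hq).1

lemma pd_one_fst (hq : q ∈ V) :
    pd 1 ψ1 q = (4/3) * A2 q * ψ1 q - (2/3) * A1 q * ψ2 q - 2 * A0 q * ψ3 q - 2 * pd 0 ψ2 q :=
  eq_sub_of_add_eq (h.liouvilleSystem q hq).2.2.1

lemma pd_zero_trd (hq : q ∈ V) :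
    pd 0 ψ3 q = 2 * A3 q * ψ1 q - (4/3) * A1 q * ψ3 q + (2/3) * A2 q * ψ2 q - 2 * pd 1 ψ2 q :=
  eq_sub_of_add_eq (h.liouvilleSystem q hq).2.2.2

lemma pd_one_trd (hq : q ∈ V) : pd 1 ψ3 q = 2 * A3 q * ψ2 q - (2/3) * A2 q * ψ3 q :=
  (h.liouvilleSystem q hq).2.1

lemma two_mul_pd_zero_pd_zero_snd (hq : q ∈ V) :
    2 * pd 0 (pd 0 ψ2) q = -(Om A0 A1 A2 A3 0 q *ᵥ prolongation ψ1 ψ2 ψ3 q) 3 := by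
  obtain ⟨hA0, hA1, hA2, -⟩ := h.contDiffAt_coeff q hq
  obtain ⟨h1, h2, h3⟩ := h.contDiffAt q hq
  have hmixed := pd_one_pd_zero h1
  rw [pd_congr (h.eventuallyEq_of_forall_mem hq fun p => h.pd_zero_fst),
    pd_congr (h.eventuallyEq_of_forall_mem hq fun p => h.pd_one_fst)] at hmixed
  simp (disch := fun_prop) only [pd_sub, pd_mul, pd_const, h.pd_zero_fst hq, h.pd_one_fst hq,
    h.pd_zero_trd hq] at hmixed
  simp only [mulVec, dotProduct, Fin.sum_univ_six, Om, Om1, prolongation, of_apply, cons_val,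
    ← pd_zero, ← pd_one]
  linear_combination hmixed

lemma two_mul_pd_one_pd_one_snd (hq : q ∈ V) :
    2 * pd 1 (pd 1 ψ2) q = -(Om A0 A1 A2 A3 1 q *ᵥ prolongation ψ1 ψ2 ψ3 q) 4 := by
  obtain ⟨-, hA1, hA2, hA3⟩ := h.contDiffAt_coeff q hq
  obtain ⟨h1, h2, h3⟩ := h.contDiffAt q hq
  have hmixed := pd_one_pd_zero h3
  rw [pd_congr (h.eventuallyEq_of_forall_mem hq fun p => h.pd_zero_trd),
    pd_congr (h.eventuallyEq_of_forall_mem hq fun p => h.pd_one_trd)] at hmixed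
  simp (disch := fun_prop) only [pd_add, pd_sub, pd_mul, pd_const, h.pd_zero_trd hq,
    h.pd_one_trd hq, h.pd_one_fst hq] at hmixed
  simp only [mulVec, dotProduct, Fin.sum_univ_six, Om, Om2, prolongation, of_apply, cons_val,
    ← pd_zero, ← pd_one]
  linear_combination -hmixed

lemma two_mul_pd_zero_pd_zero_pd_one_snd (hq : q ∈ V) :
    2 * pd 0 (pd 0 (pd 1 ψ2)) q = -(Om A0 A1 A2 A3 0 q *ᵥ prolongation ψ1 ψ2 ψ3 q) 5 := by
  obtain ⟨hA0, hA1, hA2, hA3⟩ := h.contDiffAt_coeff q hq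
  obtain ⟨h1, h2, h3⟩ := h.contDiffAt q hq
  have hyy := h.two_mul_pd_one_pd_one_snd hq
  have hderiv := pd_congr
    (h.eventuallyEq_of_forall_mem hq fun p => h.two_mul_pd_zero_pd_zero_snd) 1
  simp (disch := fun_prop) only [mulVec, dotProduct, Fin.sum_univ_six, Om, Om1, Om2, prolongation,
    of_apply, cons_val, ← pd_zero, ← pd_one, pd_neg, pd_add, pd_sub, pd_mul, pd_const, sq,
    pd_one_pd_zero, pd_zero_pd_one_pd_zero, h.pd_one_fst hq, h.pd_one_trd hq] at hyy hderiv ⊢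
  linear_combination hderiv + 3 * A0 q * hyy

lemma two_mul_pd_one_pd_zero_pd_one_snd (hq : q ∈ V) :
    2 * pd 1 (pd 0 (pd 1 ψ2)) q = -(Om A0 A1 A2 A3 1 q *ᵥ prolongation ψ1 ψ2 ψ3 q) 5 := by
  obtain ⟨hA0, hA1, hA2, hA3⟩ := h.contDiffAt_coeff q hq
  obtain ⟨h1, h2, h3⟩ := h.contDiffAt q hq
  have hxx := h.two_mul_pd_zero_pd_zero_snd hq
  have hderiv := pd_congr
    (h.eventuallyEq_of_forall_mem hq fun p => h.two_mul_pd_one_pd_one_snd) 0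
  simp (disch := fun_prop) only [mulVec, dotProduct, Fin.sum_univ_six, Om, Om1, Om2, prolongation,
    of_apply, cons_val, ← pd_zero, ← pd_one, pd_neg, pd_add, pd_sub, pd_mul, pd_const, sq,
    pd_one_pd_zero, h.pd_zero_fst hq, h.pd_zero_trd hq] at hxx hderiv ⊢
  linear_combination hderiv - 3 * A3 q * hxx

lemma isParallelOn_prolongation :
    IsParallelOn V (Om A0 A1 A2 A3) (prolongation ψ1 ψ2 ψ3) := by
  intro q hq a i
  obtain ⟨-, h2, -⟩ := h.contDiffAt q hq
  match a, i with
  | 0, 3 => exact (pd_const_mul ..).trans (h.two_mul_pd_zero_pd_zero_snd hq)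
  | 0, 5 => exact (pd_const_mul ..).trans (h.two_mul_pd_zero_pd_zero_pd_one_snd hq)
  | 1, 4 => exact (pd_const_mul ..).trans (h.two_mul_pd_one_pd_one_snd hq)
  | 1, 5 => exact (pd_const_mul ..).trans (h.two_mul_pd_one_pd_zero_pd_one_snd hq)
  | 0, 0 | 0, 1 | 0, 2 | 0, 4 | 1, 0 | 1, 1 | 1, 2 | 1, 3 =>
    simp only [mulVec, dotProduct, Fin.sum_univ_six, Om, Om1, Om2, prolongation, of_apply, cons_val,
      pd_const_mul, pd_one_pd_zero h2, h.pd_zero_fst hq, h.pd_one_fst hq, h.pd_zero_trd hq,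
      h.pd_one_trd hq]
    ring

lemma Vrow_dotProduct_prolongation (hq : q ∈ V) :
    Vrow A0 A1 A2 A3 q ⬝ᵥ prolongation ψ1 ψ2 ψ3 q = 0 := by
  obtain ⟨hA0, hA1, hA2, hA3⟩ := h.contDiffAt_coeff q hq
  have hcurv := h.isParallelOn_prolongation.curvature_mulVec_apply h.isOpen hq (i := 5)
    (fun a => (contDiffAt_Om_row hA0 hA1 hA2 hA3 a 5).differentiableAt (by simp))
    ((h.contDiffAt_prolongation hq).of_le (WithTop.coe_le_coe.2 le_top))
  rwa [mulVec, curvature_Om_five hA0 hA1 hA2 hA3, neg_dotProduct, neg_eq_zero] at hcurv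

lemma DIter_Vrow_dotProduct_prolongation (l : List (Fin 2)) (hq : q ∈ V) :
    DIter A0 A1 A2 A3 l (Vrow A0 A1 A2 A3) q ⬝ᵥ prolongation ψ1 ψ2 ψ3 q = 0 := by
  induction l generalizing q with
  | nil => exact h.Vrow_dotProduct_prolongation hq
  | cons a l ih =>
    obtain ⟨hA0, hA1, hA2, hA3⟩ := h.contDiffAt_coeff q hq
    have hW : ContDiffAt ℝ ∞ (DIter A0 A1 A2 A3 l (Vrow A0 A1 A2 A3)) q :=
      contDiffAt_DIter hA0 hA1 hA2 hA3 (contDiffAt_Vrow hA0 hA1 hA2 hA3) l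
    calc DIter A0 A1 A2 A3 (a :: l) (Vrow A0 A1 A2 A3) q ⬝ᵥ prolongation ψ1 ψ2 ψ3 q
        = pd a (fun p => DIter A0 A1 A2 A3 l (Vrow A0 A1 A2 A3) p ⬝ᵥ prolongation ψ1 ψ2 ψ3 p) q :=
          (h.isParallelOn_prolongation.pd_dotProduct hq (hW.differentiableAt (by simp))
            ((h.contDiffAt_prolongation hq).differentiableAt (by simp)) a).symm
      _ = pd a (fun _ => 0) q := pd_congr (h.eventuallyEq_of_forall_mem hq fun p => ih) a
      _ = 0 := pd_const a 0

lemma Mmat_mulVec_prolongation (hq : q ∈ V) :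
    Mmat A0 A1 A2 A3 q *ᵥ prolongation ψ1 ψ2 ψ3 q = 0 := by
  have hD (l : List (Fin 2)) := h.DIter_Vrow_dotProduct_prolongation l hq
  funext i
  fin_cases i
  · exact hD []
  · exact hD [0]
  · exact hD [1]
  · exact hD [0, 0]
  · change ((1/2 : ℝ) • (DIter A0 A1 A2 A3 [0, 1] (Vrow A0 A1 A2 A3) q
      + DIter A0 A1 A2 A3 [1, 0] (Vrow A0 A1 A2 A3) q)) ⬝ᵥ prolongation ψ1 ψ2 ψ3 q = 0
    rw [smul_dotProduct, add_dotProduct, hD, hD, add_zero, smul_zero]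
  · exact hD [1, 1]

lemma det_Mmat_eq_zero (hq : q ∈ V) (hne : prolongation ψ1 ψ2 ψ3 q ≠ 0) :
    (Mmat A0 A1 A2 A3 q).det = 0 :=
  exists_mulVec_eq_zero_iff.1 ⟨_, hne, h.Mmat_mulVec_prolongation hq⟩

end IsSmoothLiouvilleSolution

end Prolongation

section Metric

lemma hasDerivAt_abs_rpow_of_ne_zero {x : ℝ} (hx : x ≠ 0) (r : ℝ) :
    HasDerivAt (fun t : ℝ => |t| ^ r) (r * |x| ^ r / x) x := by
  convert (hasDerivAt_abs hx).rpow_const (p := r) (.inl (abs_ne_zero.2 hx)) using 1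
  rw [Real.rpow_sub_one (abs_ne_zero.2 hx), div_eq_iff hx]
  have habs : |x| ≠ 0 := abs_ne_zero.2 hx
  field_simp
  rw [mul_assoc, sign_mul_self]

/-- `A0, A1, A2, A3` are on the open set `V` the coefficients of the projective structure of the
smooth, possibly indefinite, metric `E dx² + 2F dx dy + G dy²`. -/
structure IsInducedByMetric (V : Set (ℝ × ℝ)) (A0 A1 A2 A3 E F G : ℝ × ℝ → ℝ) : Prop where
  isOpen : IsOpen V
  contDiffAt_metric : ∀ q ∈ V, ContDiffAt ℝ ∞ E q ∧ ContDiffAt ℝ ∞ F q ∧ ContDiffAt ℝ ∞ G q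
  det_ne_zero : ∀ q ∈ V, E q * G q - F q ^ 2 ≠ 0
  coeff_eq : ∀ q ∈ V,
    A0 q = (E q * pd 1 E q - 2 * E q * pd 0 F q + F q * pd 0 E q)
      / (2 * (E q * G q - F q ^ 2)) ∧
    A1 q = (3 * F q * pd 1 E q + G q * pd 0 E q - 2 * F q * pd 0 F q - 2 * E q * pd 0 G q)
      / (2 * (E q * G q - F q ^ 2)) ∧
    A2 q = (2 * F q * pd 1 F q + 2 * G q * pd 1 E q - 3 * F q * pd 0 G q - E q * pd 1 G q)
      / (2 * (E q * G q - F q ^ 2)) ∧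
    A3 q = (2 * G q * pd 1 F q - G q * pd 0 G q - F q * pd 1 G q)
      / (2 * (E q * G q - F q ^ 2))

lemma MetrisableNear.exists_isInducedByMetric {U : Set (ℝ × ℝ)} {A0 A1 A2 A3 : ℝ × ℝ → ℝ}
    {p : ℝ × ℝ} (h : MetrisableNear U A0 A1 A2 A3 p) :
    ∃ V, p ∈ V ∧ V ⊆ U ∧ ∃ E F G, IsInducedByMetric V A0 A1 A2 A3 E F G := by
  obtain ⟨V, hV, hpV, hVU, E, F, G, hE, hF, hG, hdet, hA⟩ := h
  exact ⟨V, hpV, hVU, E, F, G, hV, fun q hq => ⟨hE.contDiffAt (hV.mem_nhds hq),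
    hF.contDiffAt (hV.mem_nhds hq), hG.contDiffAt (hV.mem_nhds hq)⟩, hdet, hA⟩

/-- The weight `|EG - F²|^(-2/3)` by which a metric is rescaled to a solution of the Liouville
system. -/
noncomputable def metricWeight (E F G : ℝ × ℝ → ℝ) : ℝ × ℝ → ℝ := fun q =>
  |E q * G q - F q ^ 2| ^ (-(2/3) : ℝ)

namespace IsInducedByMetric

variable {V : Set (ℝ × ℝ)} {A0 A1 A2 A3 E F G : ℝ × ℝ → ℝ} {q : ℝ × ℝ}
  (h : IsInducedByMetric V A0 A1 A2 A3 E F G)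

include h

lemma contDiffAt_coeff (hq : q ∈ V) : ContDiffAt ℝ ∞ A0 q ∧ ContDiffAt ℝ ∞ A1 q ∧
    ContDiffAt ℝ ∞ A2 q ∧ ContDiffAt ℝ ∞ A3 q := by
  obtain ⟨hE, hF, hG⟩ := h.contDiffAt_metric q hq
  have hdet : 2 * (E q * G q - F q ^ 2) ≠ 0 := mul_ne_zero two_ne_zero (h.det_ne_zero q hq)
  have hmem := h.isOpen.mem_nhds hq
  refine ⟨.congr_of_eventuallyEq (.div ?_ ?_ hdet)
      (Filter.eventually_of_mem hmem fun p hp => (h.coeff_eq p hp).1),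
    .congr_of_eventuallyEq (.div ?_ ?_ hdet)
      (Filter.eventually_of_mem hmem fun p hp => (h.coeff_eq p hp).2.1),
    .congr_of_eventuallyEq (.div ?_ ?_ hdet)
      (Filter.eventually_of_mem hmem fun p hp => (h.coeff_eq p hp).2.2.1),
    .congr_of_eventuallyEq (.div ?_ ?_ hdet)
      (Filter.eventually_of_mem hmem fun p hp => (h.coeff_eq p hp).2.2.2)⟩ <;>
    fun_prop

lemma contDiffAt_metricWeight (hq : q ∈ V) : ContDiffAt ℝ ∞ (metricWeight E F G) q := by
  obtain ⟨hE, hF, hG⟩ := h.contDiffAt_metric q hq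
  have hdet := h.det_ne_zero q hq
  exact ContDiffAt.rpow_const_of_ne
    (ContDiffAt.abs (by fun_prop) hdet) (abs_ne_zero.2 hdet)

lemma metricWeight_ne_zero (hq : q ∈ V) : metricWeight E F G q ≠ 0 :=
  (Real.rpow_pos_of_pos (abs_pos.2 (h.det_ne_zero q hq)) _).ne'

lemma pd_metricWeight (a : Fin 2) (hq : q ∈ V) :
    pd a (metricWeight E F G) q = -(2/3) * metricWeight E F G q / (E q * G q - F q ^ 2)
      * (pd a E q * G q + E q * pd a G q - 2 * F q * pd a F q) := by
  obtain ⟨hE, hF, hG⟩ := h.contDiffAt_metric q hq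
  have hw := pd_comp (f := fun p => E p * G p - F p ^ 2) a
    (hasDerivAt_abs_rpow_of_ne_zero (h.det_ne_zero q hq) (-(2/3))) (by fun_prop)
  refine hw.trans (congrArg _ ?_)
  simp (disch := fun_prop) only [sq, pd_sub, pd_mul]
  ring

lemma liouvilleSystem : LiouvilleSystem V A0 A1 A2 A3 (fun p => metricWeight E F G p * E p)
    (fun p => metricWeight E F G p * F p) (fun p => metricWeight E F G p * G p) := by
  intro q hq
  obtain ⟨hE, hF, hG⟩ := h.contDiffAt_metric q hq
  obtain ⟨e0, e1, e2, e3⟩ := h.coeff_eq q hq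
  have hw := h.contDiffAt_metricWeight hq
  have hdet := h.det_ne_zero q hq
  simp (disch := fun_prop) only [← pd_zero, ← pd_one, pd_mul, h.pd_metricWeight _ hq, e0, e1, e2,
    e3]
  refine ⟨?_, ?_, ?_, ?_⟩ <;> field_simp <;> ring

lemma isSmoothLiouvilleSolution :
    IsSmoothLiouvilleSolution V A0 A1 A2 A3 (fun p => metricWeight E F G p * E p)
      (fun p => metricWeight E F G p * F p) (fun p => metricWeight E F G p * G p) where
  isOpen := h.isOpen
  contDiffAt_coeff _ := h.contDiffAt_coeff
  contDiffAt q hq := by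
    obtain ⟨hE, hF, hG⟩ := h.contDiffAt_metric q hq
    have hw := h.contDiffAt_metricWeight hq
    exact ⟨hw.mul hE, hw.mul hF, hw.mul hG⟩
  liouvilleSystem := h.liouvilleSystem

lemma prolongation_ne_zero (hq : q ∈ V) :
    prolongation (fun p => metricWeight E F G p * E p) (fun p => metricWeight E F G p * F p)
      (fun p => metricWeight E F G p * G p) q ≠ 0 := by
  intro hzero
  have hE : E q = 0 :=
    (mul_eq_zero.1 (congrFun hzero 0)).resolve_left (h.metricWeight_ne_zero hq)
  have hF : F q = 0 :=
    (mul_eq_zero.1 (congrFun hzero 1)).resolve_left (h.metricWeight_ne_zero hq)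
  exact h.det_ne_zero q hq (by rw [hE, hF]; ring)

end IsInducedByMetric

end Metric

/-- **Main Theorem.** If the projective structure `(A₀,A₁,A₂,A₃)` (with continuous fifth
derivatives) is metrisable near `p`, then `det M([Γ]) = 0` on a neighbourhood of `p`. -/
theorem metrisable_implies_detM_eq_zero (U : Set (ℝ × ℝ)) (hU : IsOpen U)
    (hUconn : IsConnected U) (A0 A1 A2 A3 : ℝ × ℝ → ℝ)
    (hA0 : ContDiffOn ℝ 5 A0 U) (hA1 : ContDiffOn ℝ 5 A1 U)
    (hA2 : ContDiffOn ℝ 5 A2 U) (hA3 : ContDiffOn ℝ 5 A3 U)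
    (p : ℝ × ℝ) (hp : p ∈ U)
    (hmet : MetrisableNear U A0 A1 A2 A3 p) :
    ∃ V : Set (ℝ × ℝ), IsOpen V ∧ p ∈ V ∧ V ⊆ U ∧
      ∀ q ∈ V, (Mmat A0 A1 A2 A3 q).det = 0 := by
  obtain ⟨V, hpV, hVU, E, F, G, hEFG⟩ := hmet.exists_isInducedByMetric
  exact ⟨V, hEFG.isOpen, hpV, hVU, fun q hq =>
    hEFG.isSmoothLiouvilleSolution.det_Mmat_eq_zero hq (hEFG.prolongation_ne_zero hq)⟩
end
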